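/- Let N ≥ 2, let B ⊂ ℝ^N be a radial domain, let 𝓤 be a set of continuous functions on B, and define M = {e ∈ S : u(x) ≥ u(σ_e(x)) for all x ∈ B(e) and all u ∈ 𝓤}. Suppose S = M ∪ (−M). Then there exist pairwise orthogonal unit vectors e₁, …, e_{N−1} ∈ S such that u ≡ u ∘ σ_{e_i} on B for every i = 1, …, N−1 and every u ∈ 𝓤. -/

import Mathlib

/-!
The set `M` is closed: the condition `0 < x·e` is open in `e`, and reflections preserve `B`, on
which every `u ∈ 𝓤` is continuous, so the inequality `u (σ_e x) ≤ u x` passes to limits in `e`.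
The unit sphere of a subspace of dimension at least two is connected and covered by the closed sets
`M` and `-M`, which are exchanged by the antipodal map, so it contains a point of `M ∩ (-M)`. For
such an `e` the inequalities for `σ_e = σ_{-e}` on `B(e)` and on `B(-e)` are opposite, and every
`u ∈ 𝓤` is symmetric. Applying this to the orthogonal complement of the vectors already found gives
the directions of symmetry one by one.
-/

open Set Metric Filter
open scoped RealInnerProductSpace

noncomputable section

variable {N : ℕ}

/-- Reflection through the hyperplane `H(e) = {x : ⟪x,e⟫ = 0}`:
`σ_e(x) = x - 2 (x·e) e`. -/
def reflHyp (e x : EuclideanSpace ℝ (Fin N)) : EuclideanSpace ℝ (Fin N) :=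
  x - (2 * ⟪x, e⟫) • e

/-- The half domain `B(e) = {x ∈ B : x·e > 0}`. -/
def halfDom (B : Set (EuclideanSpace ℝ (Fin N))) (e : EuclideanSpace ℝ (Fin N)) :
    Set (EuclideanSpace ℝ (Fin N)) := {x ∈ B | 0 < ⟪x, e⟫}

/-- A radial domain: an open ball or an open annulus centered at the origin. -/
def IsRadialDomain (B : Set (EuclideanSpace ℝ (Fin N))) : Prop :=
  (∃ R, 0 < R ∧ B = Metric.ball 0 R) ∨
  (∃ r R, 0 < r ∧ r < R ∧ B = {x : EuclideanSpace ℝ (Fin N) | r < ‖x‖ ∧ ‖x‖ < R})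

/-- `u` is foliated Schwarz symmetric on `D` with respect to the unit vector `p`:
`u(x) ≥ u(y)` whenever `|x| = |y|` and `x·p ≥ y·p`.  (This is equivalent to axial
symmetry with respect to `ℝp` together with monotonicity in the polar angle.) -/
def FoliatedSchwarzOn (D : Set (EuclideanSpace ℝ (Fin N)))
    (u : EuclideanSpace ℝ (Fin N) → ℝ) (p : EuclideanSpace ℝ (Fin N)) : Prop :=
  ∀ x ∈ D, ∀ y ∈ D, ‖x‖ = ‖y‖ → ⟪y, p⟫ ≤ ⟪x, p⟫ → u y ≤ u x

/-- The set `M = {e ∈ S : u ≥ u ∘ σ_e on B(e) for all u ∈ 𝓤}`. -/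
def reflMonotoneSet (B : Set (EuclideanSpace ℝ (Fin N)))
    (𝓤 : Set (EuclideanSpace ℝ (Fin N) → ℝ)) : Set (EuclideanSpace ℝ (Fin N)) :=
  {e | ‖e‖ = 1 ∧ ∀ u ∈ 𝓤, ∀ x ∈ halfDom B e, u (reflHyp e x) ≤ u x}

section OrthonormalFamily

variable {𝕜 E : Type*} [RCLike 𝕜] [NormedAddCommGroup E] [InnerProductSpace 𝕜 E]

lemma rank_add_rank_orthogonal (W : Submodule 𝕜 E) [W.HasOrthogonalProjection] :
    Module.rank 𝕜 W + Module.rank 𝕜 Wᗮ = Module.rank 𝕜 E := by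
  rw [← (Submodule.quotientEquivOfIsCompl W Wᗮ W.isCompl_orthogonal).rank_eq, add_comm,
    Submodule.rank_quotient_add_rank]

lemma one_lt_rank_orthogonal_span_range {n : ℕ} (hn : (n + 1 : ℕ) < Module.rank 𝕜 E)
    (e : Fin n → E) : 1 < Module.rank 𝕜 (Submodule.span 𝕜 (range e))ᗮ := by
  have hspan : Module.rank 𝕜 (Submodule.span 𝕜 (range e)) ≤ n :=
    (rank_span_le _).trans (by simpa using Cardinal.mk_range_le_lift (f := e))
  have := FiniteDimensional.span_of_finite 𝕜 (finite_range e)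
  by_contra! horth
  refine hn.not_ge ?_
  rw [← rank_add_rank_orthogonal (Submodule.span 𝕜 (range e)), Nat.cast_succ]
  exact add_le_add hspan horth

lemma exists_orthonormal_of_forall_submodule {P : E → Prop}
    (hP : ∀ W : Submodule 𝕜 E, 1 < Module.rank 𝕜 W → ∃ e ∈ W, ‖e‖ = 1 ∧ P e) (n : ℕ)
    (hn : n < Module.rank 𝕜 E) : ∃ e : Fin n → E, Orthonormal 𝕜 e ∧ ∀ i, P (e i) := by
  induction n with
  | zero => exact ⟨Fin.elim0, .of_isEmpty _, fun i => i.elim0⟩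
  | succ n ih =>
    obtain ⟨e, he, heP⟩ := ih ((Nat.cast_le.2 n.le_succ).trans_lt hn)
    obtain ⟨v, hv, hv_norm, hvP⟩ := hP _ (one_lt_rank_orthogonal_span_range hn e)
    have hve (i : Fin n) : inner 𝕜 v (e i) = 0 :=
      Submodule.inner_left_of_mem_orthogonal (Submodule.subset_span (mem_range_self i)) hv
    exact ⟨Matrix.vecCons v e, orthonormal_vecCons_iff.2 ⟨hv_norm, hve, he⟩, Fin.cases hvP heP⟩

end OrthonormalFamily

lemma exists_norm_eq_one_mem_and_neg_mem {V : Type*} [NormedAddCommGroup V] [NormedSpace ℝ V]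
    (hV : 1 < Module.rank ℝ V) {C : Set V} (hC : IsClosed C)
    (hcover : ∀ v : V, ‖v‖ = 1 → v ∈ C ∨ -v ∈ C) : ∃ v : V, ‖v‖ = 1 ∧ v ∈ C ∧ -v ∈ C := by
  obtain ⟨a, ha, haC⟩ : ∃ a ∈ sphere (0 : V) 1, a ∈ C := by
    have : Nontrivial V := rank_pos_iff_nontrivial.1 (zero_lt_one.trans hV)
    obtain ⟨b, hb⟩ := (NormedSpace.sphere_nonempty (x := (0 : V))).2 zero_le_one
    rcases hcover b (mem_sphere_zero_iff_norm.1 hb) with hbC | hbC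
    · exact ⟨b, hb, hbC⟩
    · exact ⟨-b, by simpa using hb, hbC⟩
  obtain ⟨v, hv, hvC⟩ := isPreconnected_closed_iff.1 (isPreconnected_sphere hV 0 1) C (-C) hC
    hC.neg (fun v hv => hcover v (mem_sphere_zero_iff_norm.1 hv)) ⟨a, ha, haC⟩
    ⟨-a, by simpa using ha, by simpa using haC⟩
  exact ⟨v, mem_sphere_zero_iff_norm.1 hv, hvC⟩

section Reflection

variable {E α : Type*} [NormedAddCommGroup E] [InnerProductSpace ℝ E]

/-- A subset of a normed space is radial if membership in it depends only on the norm. -/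
def IsRadial (B : Set E) : Prop := ∀ ⦃x y : E⦄, ‖x‖ = ‖y‖ → x ∈ B → y ∈ B

lemma IsRadial.reflection_mem {B : Set E} (hB : IsRadial B) (W : Submodule ℝ E)
    [W.HasOrthogonalProjection] {x : E} (hx : x ∈ B) : W.reflection x ∈ B :=
  hB (W.reflection.norm_map x).symm hx

/-- The set `M` of the unit vectors `e` such that `u ∘ σ_e ≤ u` on `B(e)` for all `u ∈ 𝓤`, in an
arbitrary real inner product space; `σ_e` is encoded as `Submodule.reflection` in the hyperplane
`(ℝ ∙ e)ᗮ`. -/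
def reflectionMonotoneDirections [LE α] (B : Set E) (𝓤 : Set (E → α)) : Set E :=
  {e | ‖e‖ = 1 ∧ ∀ u ∈ 𝓤, ∀ x ∈ B, 0 < ⟪x, e⟫ → u ((ℝ ∙ e)ᗮ.reflection x) ≤ u x}

lemma reflection_orthogonal_singleton_apply_of_norm_eq_one {e : E} (he : ‖e‖ = 1) (x : E) :
    (ℝ ∙ e)ᗮ.reflection x = x - (2 * ⟪x, e⟫) • e := by
  rw [Submodule.reflection_orthogonal_apply, Submodule.reflection_singleton_apply, he,
    real_inner_comm]
  simp [mul_smul, two_smul]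

lemma inner_reflection_orthogonal_singleton (x e : E) :
    ⟪(ℝ ∙ e)ᗮ.reflection x, e⟫ = -⟪x, e⟫ := by
  rw [← LinearIsometryEquiv.inner_map_map (ℝ ∙ e)ᗮ.reflection x e,
    Submodule.reflection_orthogonalComplement_singleton_eq_neg, inner_neg_right, neg_neg]

lemma reflection_orthogonal_singleton_neg (e x : E) :
    (ℝ ∙ (-e))ᗮ.reflection x = (ℝ ∙ e)ᗮ.reflection x := by
  simp only [Submodule.reflection_orthogonal_apply, Submodule.reflection_singleton_apply,
    inner_neg_left, norm_neg, neg_div, neg_smul, smul_neg, neg_neg]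

lemma continuousOn_reflection_orthogonal_singleton (x : E) :
    ContinuousOn (fun e : E => (ℝ ∙ e)ᗮ.reflection x) (sphere 0 1) := by
  have hformula : Continuous fun e : E => x - (2 * ⟪x, e⟫) • e := by fun_prop
  exact hformula.continuousOn.congr fun e he =>
    reflection_orthogonal_singleton_apply_of_norm_eq_one (mem_sphere_zero_iff_norm.1 he) x

lemma isClosed_reflectionMonotoneDirections [TopologicalSpace α] [Preorder α]
    [OrderClosedTopology α] {B : Set E} (hB : IsRadial B) {𝓤 : Set (E → α)}
    (h𝓤 : ∀ u ∈ 𝓤, ContinuousOn u B) : IsClosed (reflectionMonotoneDirections B 𝓤) := by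
  have hsphere : reflectionMonotoneDirections B 𝓤 ⊆ sphere 0 1 := fun e he =>
    mem_sphere_zero_iff_norm.2 he.1
  refine isClosed_of_closure_subset fun e he => ?_
  have he_sphere : e ∈ sphere (0 : E) 1 := closure_minimal hsphere isClosed_sphere he
  refine ⟨mem_sphere_zero_iff_norm.1 he_sphere, fun u hu x hx hxe => ?_⟩
  have hopen : IsOpen {e' : E | 0 < ⟪x, e'⟫} :=
    isOpen_lt continuous_const (continuous_const.inner continuous_id)
  have hcont : ContinuousOn (fun e' : E => u ((ℝ ∙ e')ᗮ.reflection x)) (sphere 0 1) :=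
    (h𝓤 u hu).comp (continuousOn_reflection_orthogonal_singleton x)
      fun e' _ => hB.reflection_mem _ hx
  exact ContinuousWithinAt.closure_le (hopen.closure_inter ⟨he, hxe⟩)
    ((hcont e he_sphere).mono (inter_subset_left.trans hsphere)) continuousWithinAt_const
    fun e' he' => he'.1.2 u hu x hx he'.2

lemma apply_reflection_eq_of_inner_pos [PartialOrder α] {B : Set E} (hB : IsRadial B)
    {𝓤 : Set (E → α)} {e : E} (he : e ∈ reflectionMonotoneDirections B 𝓤)
    (hneg : -e ∈ reflectionMonotoneDirections B 𝓤) {u : E → α} (hu : u ∈ 𝓤) {x : E} (hx : x ∈ B)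
    (hxe : 0 < ⟪x, e⟫) : u ((ℝ ∙ e)ᗮ.reflection x) = u x := by
  refine le_antisymm (he.2 u hu x hx hxe) ?_
  have hle := hneg.2 u hu ((ℝ ∙ e)ᗮ.reflection x) (hB.reflection_mem _ hx)
    (by rwa [inner_neg_right, inner_reflection_orthogonal_singleton, neg_neg])
  rwa [reflection_orthogonal_singleton_neg, Submodule.reflection_reflection] at hle

lemma apply_reflection_eq_of_mem_of_neg_mem [PartialOrder α] {B : Set E} (hB : IsRadial B)
    {𝓤 : Set (E → α)} {e : E} (he : e ∈ reflectionMonotoneDirections B 𝓤)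
    (hneg : -e ∈ reflectionMonotoneDirections B 𝓤) {u : E → α} (hu : u ∈ 𝓤) {x : E}
    (hx : x ∈ B) : u ((ℝ ∙ e)ᗮ.reflection x) = u x := by
  rcases lt_trichotomy 0 ⟪x, e⟫ with hpos | hzero | hlt
  · exact apply_reflection_eq_of_inner_pos hB he hneg hu hx hpos
  · rw [Submodule.reflection_mem_subspace_eq_self
      (Submodule.mem_orthogonal_singleton_iff_inner_left.2 hzero.symm)]
  · rw [← reflection_orthogonal_singleton_neg]
    exact apply_reflection_eq_of_inner_pos hB hneg (by rwa [neg_neg]) hu hx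
      (by rwa [inner_neg_right, neg_pos])

lemma exists_mem_submodule_forall_apply_reflection_eq [TopologicalSpace α] [PartialOrder α]
    [OrderClosedTopology α] {B : Set E} (hB : IsRadial B) {𝓤 : Set (E → α)}
    (h𝓤 : ∀ u ∈ 𝓤, ContinuousOn u B) (W : Submodule ℝ E)
    (hcover : ∀ e ∈ W, ‖e‖ = 1 →
      e ∈ reflectionMonotoneDirections B 𝓤 ∨ -e ∈ reflectionMonotoneDirections B 𝓤)
    (hW : 1 < Module.rank ℝ W) :
    ∃ e ∈ W, ‖e‖ = 1 ∧ ∀ u ∈ 𝓤, ∀ x ∈ B, u ((ℝ ∙ e)ᗮ.reflection x) = u x := by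
  have hclosed : IsClosed ((↑) ⁻¹' reflectionMonotoneDirections B 𝓤 : Set W) :=
    (isClosed_reflectionMonotoneDirections hB h𝓤).preimage continuous_subtype_val
  obtain ⟨e, he, hmem, hneg⟩ :=
    exists_norm_eq_one_mem_and_neg_mem hW hclosed fun e he => hcover e e.2 he
  exact ⟨e, e.2, he, fun u hu x hx => apply_reflection_eq_of_mem_of_neg_mem hB hmem hneg hu hx⟩

theorem exists_orthogonal_symmetry_hyperplanes_general [TopologicalSpace α] [PartialOrder α]
    [OrderClosedTopology α] {B : Set E} (hB : IsRadial B) {𝓤 : Set (E → α)}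
    (h𝓤 : ∀ u ∈ 𝓤, ContinuousOn u B)
    (hcover : ∀ e : E, ‖e‖ = 1 →
      e ∈ reflectionMonotoneDirections B 𝓤 ∨ -e ∈ reflectionMonotoneDirections B 𝓤)
    {n : ℕ} (hn : n < Module.rank ℝ E) :
    ∃ e : Fin n → E, Orthonormal ℝ e ∧
      ∀ i, ∀ u ∈ 𝓤, ∀ x ∈ B, u ((ℝ ∙ e i)ᗮ.reflection x) = u x :=
  exists_orthonormal_of_forall_submodule (fun W hW =>
    exists_mem_submodule_forall_apply_reflection_eq hB h𝓤 W (fun e _ => hcover e) hW) n hn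

end Reflection

lemma IsRadialDomain.isRadial {B : Set (EuclideanSpace ℝ (Fin N))} (hB : IsRadialDomain B) :
    IsRadial B := by
  intro x y hxy hx
  rcases hB with ⟨R, -, rfl⟩ | ⟨r, R, -, -, rfl⟩
  · simpa only [mem_ball_zero_iff, hxy] using hx
  · simpa only [mem_ofPred_eq, hxy] using hx

lemma reflHyp_eq_reflection {e : EuclideanSpace ℝ (Fin N)} (he : ‖e‖ = 1)
    (x : EuclideanSpace ℝ (Fin N)) : reflHyp e x = (ℝ ∙ e)ᗮ.reflection x :=
  (reflection_orthogonal_singleton_apply_of_norm_eq_one he x).symm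

lemma reflMonotoneSet_eq_reflectionMonotoneDirections (B : Set (EuclideanSpace ℝ (Fin N)))
    (𝓤 : Set (EuclideanSpace ℝ (Fin N) → ℝ)) :
    reflMonotoneSet B 𝓤 = reflectionMonotoneDirections B 𝓤 := by
  ext e
  refine and_congr_right fun he => ?_
  simp only [halfDom, mem_ofPred_eq, and_imp, reflHyp_eq_reflection he]

/-- first step in the proof of Proposition `newprop`:
if `S = M ∪ (−M)`, then there are `N−1` pairwise orthogonal unit vectors
`e₁, …, e_{N−1}` such that every `u ∈ 𝓤` is symmetric with respect to each
hyperplane `H(eᵢ)`. -/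
theorem exists_orthogonal_symmetry_hyperplanes
    (N : ℕ) (hN : 2 ≤ N)
    (B : Set (EuclideanSpace ℝ (Fin N))) (hB : IsRadialDomain B)
    (𝓤 : Set (EuclideanSpace ℝ (Fin N) → ℝ))
    (h𝓤 : ∀ u ∈ 𝓤, ContinuousOn u B)
    (hSM : ∀ e : EuclideanSpace ℝ (Fin N), ‖e‖ = 1 →
      e ∈ reflMonotoneSet B 𝓤 ∨ -e ∈ reflMonotoneSet B 𝓤) :
    ∃ e : Fin (N - 1) → EuclideanSpace ℝ (Fin N),
      (∀ i, ‖e i‖ = 1) ∧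
      (∀ i j, i ≠ j → ⟪e i, e j⟫ = 0) ∧
      (∀ i, ∀ u ∈ 𝓤, ∀ x ∈ B, u (reflHyp (e i) x) = u x) := by
  simp only [reflMonotoneSet_eq_reflectionMonotoneDirections] at hSM
  have hrank : (N - 1 : ℕ) < Module.rank ℝ (EuclideanSpace ℝ (Fin N)) := by
    rw [← Module.finrank_eq_rank, finrank_euclideanSpace_fin]
    exact_mod_cast Nat.sub_lt (by omega) one_pos
  obtain ⟨e, he, hsymm⟩ :=
    exists_orthogonal_symmetry_hyperplanes_general hB.isRadial h𝓤 hSM hrank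
  refine ⟨e, he.1, fun i j hij => he.2 hij, fun i u hu x hx => ?_⟩
  rw [reflHyp_eq_reflection (he.1 i)]
  exact hsymm i u hu x hx

end
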